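/- Let n ≥ 1 and let δ be an integer with 1 ≤ δ and 4(δ − 1) ≤ n. Let T : Fin ℓ → ZMod n be a sequence such that the number of subsets S ⊆ Fin ℓ (including the empty set) with ∑_{i∈S} T i = 0 is strictly less than 2^(ℓ − n + 1 + δ). Then there exist g ∈ ZMod n of additive order n, natural numbers u ≥ v with u + v = n − 2δ + 1, w = ℓ − n + δ, and integers x₁, …, x_{δ−1}, y₁, …, y_w with −n/2 < x_i ≤ n/2, −n/2 < y_j ≤ n/2 and x_i ≠ 0 for all i, j, such that ∑_{i=1}^{δ−1} |x_i| ≤ 2δ − 2 and the multiset of values {T i : i ∈ Fin ℓ} equals the multiset consisting of u copies of g, v copies of −g, the elements x_i • g for i = 1, …, δ − 1, and the elements y_j • g for j = 1, …, w. -/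

import Mathlib

/-!
The number of zero-sum subsets of a sequence `T` of length `ℓ` is at least `2 ^ (ℓ - k)`, where `k`
is the largest length of a zero-sum free sequence obtained from a subsequence of `T` by changing
signs (`exists_signed_zeroSumFree`). The hypothesis therefore yields such a sequence of length
`n - δ`, and the theorem becomes a statement about the structure of long zero-sum free sequences
in `ZMod n` (`inverse_zeroSumFree`).

By Scherk's theorem (`card_add_of_unique_zero`), the number of nonzero subset sums is superadditive
over disjoint parts of a zero-sum free sequence. A pair of distinct values contributes three sums and a
single term one, so, since there are at most `n - 1` nonzero sums, some value `g` must occur at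
least `n - 2δ + 1` times (`exists_large_mult`); `4 (δ - 1) ≤ n` makes it possible to take `g` of
order `n`. Adding the remaining terms `c i • g`, `c i > 0`, one at a time, the subset sums keep
filling an interval of multiples of `g` that never reaches `n • g` (`sum_coeff_lt`), whence the sum
of these `δ - 1` coefficients is at most `2δ - 2`. Undoing the sign changes gives the claim.
-/

open Finset
open scoped Pointwise

set_option linter.unusedSectionVars false

namespace ZeroSumInverse

/-! ### Zero-sum free families in abelian groups -/

section General

variable {ι G : Type*} [DecidableEq ι] [AddCommGroup G] [DecidableEq G]

/-- The family `F` restricted to `J` is zero-sum free: only the empty subset of `J` has sum `0`. -/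
def ZeroSumFree (F : ι → G) (J : Finset ι) : Prop :=
  ∀ S ⊆ J, ∑ i ∈ S, F i = 0 → S = ∅

/-- The set of all sums of subsets of `J`; it contains `0`, the sum of the empty subset. -/
def subsetSums (F : ι → G) (J : Finset ι) : Finset G :=
  J.powerset.image fun S => ∑ i ∈ S, F i

/-- The multiplicity of `g` as a value of `F` on `J`. -/
def mult (F : ι → G) (J : Finset ι) (g : G) : ℕ := #{i ∈ J | F i = g}

/-- The number of subsets of `J` with sum `z`. -/
def sumCount (F : ι → G) (J : Finset ι) (z : G) : ℕ := #{S ∈ J.powerset | ∑ i ∈ S, F i = z}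

theorem ZeroSumFree.mono {F : ι → G} {J K : Finset ι} (h : ZeroSumFree F J) (hK : K ⊆ J) :
    ZeroSumFree F K := fun S hS h0 => h S (hS.trans hK) h0

theorem mem_subsetSums {F : ι → G} {J : Finset ι} {z : G} :
    z ∈ subsetSums F J ↔ ∃ S ⊆ J, ∑ i ∈ S, F i = z := by
  simp [subsetSums]

theorem ZeroSumFree.ne_zero {F : ι → G} {J : Finset ι} (h : ZeroSumFree F J) {i : ι}
    (hi : i ∈ J) : F i ≠ 0 := fun h0 => by
  have := h {i} (by simpa using hi) (by simpa using h0)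
  simp at this

theorem sum_signFlip (F : ι → G) (S A : Finset ι) :
    ∑ i ∈ symmDiff A S, (if i ∈ A then -F i else F i) = ∑ i ∈ S, F i - ∑ i ∈ A, F i := by
  have hd : Disjoint (A \ S) (S \ A) := disjoint_sdiff_sdiff
  rw [symmDiff_def, sup_eq_union, sum_union hd,
    sum_congr rfl (g := fun i => -F i) (fun i hi => if_pos (mem_sdiff.1 hi).1),
    sum_congr (s₁ := S \ A) rfl (g := F) (fun i hi => if_neg (mem_sdiff.1 hi).2),
    ← sum_inter_add_sum_sdiff S A F, ← sum_inter_add_sum_sdiff A S F, inter_comm A S,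
    sum_neg_distrib]
  abel

/-- Negating the terms in `A` translates all subset sums by `-∑ i ∈ A, F i`, via the bijection
`S ↦ A ∆ S`, so representations of `∑ i ∈ A, F i` become representations of `0`. -/
theorem sumCount_flip (F : ι → G) (J A : Finset ι) (hA : A ⊆ J) :
    sumCount (fun i => if i ∈ A then -F i else F i) J 0 = sumCount F J (∑ i ∈ A, F i) := by
  symm
  refine card_bij' (fun S _ => symmDiff A S) (fun S _ => symmDiff A S) ?_ ?_ ?_ ?_
  · intro S hS
    rw [mem_filter, mem_powerset] at hS ⊢
    refine ⟨?_, by rw [sum_signFlip, hS.2, sub_self]⟩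
    exact symmDiff_le_sup.trans (sup_le hA hS.1)
  · intro S hS
    rw [mem_filter, mem_powerset] at hS ⊢
    refine ⟨symmDiff_le_sup.trans (sup_le hA hS.1), ?_⟩
    have := sum_signFlip F (symmDiff A S) A
    rw [symmDiff_symmDiff_cancel_left, hS.2] at this
    exact (sub_eq_zero.1 this.symm)
  · intro S _; exact symmDiff_symmDiff_cancel_left A S
  · intro S _; exact symmDiff_symmDiff_cancel_left A S

theorem sumCount_insert (F : ι → G) (J : Finset ι) (i : ι) (hi : i ∉ J) :
    sumCount F (insert i J) 0 = sumCount F J 0 + sumCount F J (-F i) := by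
  unfold sumCount
  rw [powerset_insert, filter_union, card_union_of_disjoint]
  · congr 1
    symm
    refine card_bij (fun S _ => insert i S) ?_ ?_ ?_
    · intro S hS
      rw [mem_filter, mem_powerset] at hS
      rw [mem_filter, sum_insert (fun h => hi (hS.1 h)), hS.2]
      exact ⟨mem_image_of_mem _ (mem_powerset.2 hS.1), by simp⟩
    · intro S hS S' hS' h
      rw [mem_filter, mem_powerset] at hS hS'
      have := congrArg (fun X => X.erase i) h
      simpa [erase_insert (fun h => hi (hS.1 h)), erase_insert (fun h => hi (hS'.1 h))] using this
    · intro S hS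
      rw [mem_filter, mem_image] at hS
      obtain ⟨⟨S', hS', rfl⟩, h0⟩ := hS
      rw [mem_powerset] at hS'
      rw [sum_insert (fun h => hi (hS' h))] at h0
      refine ⟨S', ?_, rfl⟩
      rw [mem_filter, mem_powerset]
      exact ⟨hS', eq_neg_of_add_eq_zero_right h0⟩
  · rw [disjoint_left]
    intro S hS hS'
    rw [mem_filter, mem_powerset] at hS
    rw [mem_filter, mem_image] at hS'
    obtain ⟨⟨S', _, rfl⟩, _⟩ := hS'
    exact hi (hS.1 (mem_insert_self _ _))

/-- A signed form of Olson's lower bound on the number of zero-sum subsets. If `i` lies in a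
zero-sum subset `S` of `J`, then `N(J) = N(J \ i) + N_{J \ i}(-F i)`, and the second term counts
zero-sums after negating the terms in `S \ i`; induction applies to both terms. -/
theorem exists_signed_zeroSumFree (J : Finset ι) : ∀ F : ι → G,
    ∃ F' : ι → G, (∀ i, F' i = F i ∨ F' i = -F i) ∧
      ∃ K ⊆ J, ZeroSumFree F' K ∧ 2 ^ #J ≤ 2 ^ #K * sumCount F J 0 := by
  induction J using Finset.strongInduction with
  | H J ih =>
  intro F
  by_cases hz : ZeroSumFree F J
  · refine ⟨F, fun i => Or.inl rfl, J, Subset.rfl, hz, ?_⟩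
    have : 0 < sumCount F J 0 := card_pos.2 ⟨∅, by simp⟩
    exact Nat.le_mul_of_pos_right _ this
  · unfold ZeroSumFree at hz
    push Not at hz
    obtain ⟨S, hSJ, hS0, hne⟩ := hz
    obtain ⟨i, hi⟩ := hne
    have hiJ := hSJ hi
    set J' := J.erase i with hJ'
    have hlt : J' ⊂ J := erase_ssubset hiJ
    have hins : insert i J' = J := insert_erase hiJ
    have hcard : #J = #J' + 1 := by rw [← hins, card_insert_of_notMem (notMem_erase i J)]
    have hsum : ∑ k ∈ S.erase i, F k = -F i := by
      rw [← add_sum_erase S F hi] at hS0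
      exact eq_neg_of_add_eq_zero_right hS0
    have hN : sumCount F J 0 = sumCount F J' 0 +
        sumCount (fun k => if k ∈ S.erase i then -F k else F k) J' 0 := by
      rw [sumCount_flip F J' (S.erase i) (erase_subset_erase i hSJ), hsum,
        ← sumCount_insert F J' i (notMem_erase i J), hins]
    obtain ⟨F₁, hF₁, K₁, hK₁, hz₁, hb₁⟩ := ih J' hlt F
    obtain ⟨F₂, hF₂, K₂, hK₂, hz₂, hb₂⟩ :=
      ih J' hlt (fun k => if k ∈ S.erase i then -F k else F k)
    rw [hN, hcard, pow_succ]
    rcases le_total #K₁ #K₂ with h | h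
    · refine ⟨F₂, ?_, K₂, hK₂.trans hlt.1, hz₂, ?_⟩
      · intro k
        have := hF₂ k
        split_ifs at this
        · rw [neg_neg] at this; exact this.symm
        · exact this
      · have := Nat.mul_le_mul_right (sumCount F J' 0) (Nat.pow_le_pow_right two_pos h)
        rw [mul_add]; omega
    · refine ⟨F₁, hF₁, K₁, hK₁.trans hlt.1, hz₁, ?_⟩
      have := Nat.mul_le_mul_right
        (sumCount (fun k => if k ∈ S.erase i then -F k else F k) J' 0)
        (Nat.pow_le_pow_right two_pos h)
      rw [mul_add]; omega

/-- Scherk's theorem: if `0 = a + b` with `a ∈ A`, `b ∈ B` forces `b = 0`, then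
`|A + B| ≥ |A| + |B| - 1`. The proof is by Dyson's transform at an `e ∈ A` with `e + b ∉ A`, which
strictly shrinks `B` and preserves the hypotheses. -/
theorem card_add_of_unique_zero [Finite G] (B : Finset G) : ∀ A : Finset G, 0 ∈ A → 0 ∈ B →
    (∀ a ∈ A, ∀ b ∈ B, a + b = 0 → b = 0) → #A + #B ≤ #(A + B) + 1 := by
  induction B using Finset.strongInduction with
  | H B ih =>
  intro A hA hB hu
  by_cases h1 : ∃ b ∈ B, b ≠ 0
  · obtain ⟨b, hb, hb0⟩ := h1
    have hex : ∃ e ∈ A, e + b ∉ A := by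
      by_contra! hcon
      have hmul : ∀ k : ℕ, k • b ∈ A := by
        intro k
        induction k with
        | zero => simpa using hA
        | succ k ihk => rw [succ_nsmul]; exact hcon _ ihk
      have hpos := addOrderOf_pos b
      refine hb0 (hu _ (hmul (addOrderOf b - 1)) b hb ?_)
      rw [← succ_nsmul, Nat.sub_add_cancel hpos, addOrderOf_nsmul_eq_zero]
    obtain ⟨e, he, heb⟩ := hex
    have hcard := addDysonETransform.card e (A, B)
    have hsub := card_le_card (addDysonETransform.subset e (A, B))
    simp only [addDysonETransform] at hcard hsub
    have hmem : ∀ y, y ∈ -e +ᵥ A ↔ e + y ∈ A := by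
      intro y
      rw [← neg_vadd_mem_iff]; simp
    have := ih (B ∩ (-e +ᵥ A)) ?_ (A ∪ (e +ᵥ B)) (mem_union_left _ hA) ?_ ?_
    · omega
    · refine ⟨inter_subset_left, fun h => heb ?_⟩
      have := (mem_inter.1 (h hb)).2
      rwa [hmem] at this
    · rw [mem_inter, hmem, add_zero]; exact ⟨hB, he⟩
    · intro x hx y hy hxy
      rw [mem_inter, hmem] at hy
      rw [mem_union] at hx
      rcases hx with hx | hx
      · exact hu x hx y hy.1 hxy
      · rw [mem_vadd_finset] at hx
        obtain ⟨b', hb', rfl⟩ := hx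
        rw [vadd_eq_add] at hxy
        have hb0 : b' = 0 := hu _ hy.2 b' hb' (by rw [← hxy]; abel)
        subst hb0
        exact hu e he y hy.1 (by simpa using hxy)
  · push Not at h1
    have : B = {0} := eq_singleton_iff_unique_mem.2 ⟨hB, h1⟩
    subst this
    simp

theorem subsetSums_union {F : ι → G} {J K : Finset ι} (hd : Disjoint J K) :
    subsetSums F (J ∪ K) = subsetSums F J + subsetSums F K := by
  ext z
  rw [mem_add]
  simp only [mem_subsetSums]
  constructor
  · rintro ⟨S, hS, rfl⟩
    refine ⟨_, ⟨S ∩ J, inter_subset_right, rfl⟩, _, ⟨S ∩ K, inter_subset_right, rfl⟩, ?_⟩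
    rw [← sum_union (hd.mono inter_subset_right inter_subset_right), ← inter_union_distrib_left,
      inter_eq_left.2 hS]
  · rintro ⟨_, ⟨S, hS, rfl⟩, _, ⟨S', hS', rfl⟩, rfl⟩
    exact ⟨S ∪ S', union_subset_union hS hS', sum_union (hd.mono hS hS')⟩

theorem zero_mem_subsetSums (F : ι → G) (J : Finset ι) : 0 ∈ subsetSums F J :=
  mem_subsetSums.2 ⟨∅, empty_subset _, sum_empty⟩

theorem card_subsetSums_union [Finite G] {F : ι → G} {J K : Finset ι} (hd : Disjoint J K)
    (hz : ZeroSumFree F (J ∪ K)) :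
    #(subsetSums F J) + #(subsetSums F K) ≤ #(subsetSums F (J ∪ K)) + 1 := by
  rw [subsetSums_union hd]
  refine card_add_of_unique_zero _ _ (zero_mem_subsetSums F J) (zero_mem_subsetSums F K) ?_
  intro a ha b hb hab
  obtain ⟨S, hS, rfl⟩ := mem_subsetSums.1 ha
  obtain ⟨S', hS', rfl⟩ := mem_subsetSums.1 hb
  rw [← sum_union (hd.mono hS hS')] at hab
  have := hz _ (union_subset_union hS hS') hab
  rw [(union_eq_empty.1 this).2, sum_empty]

theorem card_le_card_subsetSums [Finite G] {F : ι → G} (J : Finset ι) (hz : ZeroSumFree F J) :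
    #J + 1 ≤ #(subsetSums F J) := by
  induction J using Finset.induction_on with
  | empty => exact card_pos.2 ⟨0, zero_mem_subsetSums F ∅⟩
  | insert i J hi ih =>
    have h1 := ih (hz.mono (subset_insert i J))
    rw [insert_eq] at hz ⊢
    have h2 := card_subsetSums_union (disjoint_singleton_left.2 hi) hz
    have h3 : 2 ≤ #(subsetSums F {i}) := by
      have hsub : ({0, F i} : Finset G) ⊆ subsetSums F {i} := by
        intro z hz'
        simp only [mem_insert, mem_singleton] at hz'
        rcases hz' with rfl | rfl
        · exact zero_mem_subsetSums F _
        · exact mem_subsetSums.2 ⟨{i}, Subset.rfl, sum_singleton _ _⟩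
      have := card_le_card hsub
      rwa [card_pair (hz.ne_zero (by simp)).symm] at this
    rw [card_union_of_disjoint (disjoint_singleton_left.2 hi), card_singleton]
    omega

theorem card_subsetSums_pair {F : ι → G} {i j : ι} (hne : F i ≠ F j)
    (hz : ZeroSumFree F {i, j}) : 4 ≤ #(subsetSums F {i, j}) := by
  have hij : i ≠ j := fun h => hne (by rw [h])
  have hi := hz.ne_zero (i := i) (by simp)
  have hj := hz.ne_zero (i := j) (by simp)
  have hs : F i + F j ≠ 0 := fun h => by
    have := hz {i, j} Subset.rfl (by rw [sum_pair hij, h])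
    simp at this
  have hsub : ({0, F i, F j, F i + F j} : Finset G) ⊆ subsetSums F {i, j} := by
    intro z hz'
    simp only [mem_insert, mem_singleton] at hz'
    rw [mem_subsetSums]
    rcases hz' with rfl | rfl | rfl | rfl
    · exact ⟨∅, by simp, by simp⟩
    · exact ⟨{i}, by simp, by simp⟩
    · exact ⟨{j}, by simp, by simp⟩
    · exact ⟨{i, j}, Subset.rfl, sum_pair hij⟩
  refine le_trans ?_ (card_le_card hsub)
  rw [card_insert_of_notMem, card_insert_of_notMem, card_insert_of_notMem, card_singleton]
  · simpa using hi
  · simpa [hne] using hj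
  · simp only [mem_insert, mem_singleton, not_or]
    exact ⟨hi.symm, hj.symm, hs.symm⟩

theorem mult_sdiff_pair_add {F : ι → G} {J : Finset ι} {i : ι} (hi : i ∈ J) {K : Finset ι}
    (hK : i ∈ K) : mult F (J \ K) (F i) + 1 ≤ mult F J (F i) := by
  unfold mult
  apply Nat.succ_le_of_lt
  apply card_lt_card
  refine ⟨filter_subset_filter _ sdiff_subset, fun h => ?_⟩
  have := h (mem_filter.2 ⟨hi, rfl⟩)
  exact (mem_sdiff.1 (mem_filter.1 this).1).2 hK

theorem mult_mono {F : ι → G} {J K : Finset ι} (h : K ⊆ J) (g : G) : mult F K g ≤ mult F J g :=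
  card_le_card (filter_subset_filter _ h)

/-- Two terms with distinct values can be removed so that the bound `q` on the multiplicities drops
by one: take a term of most frequent value and one of second most frequent value. A third value of
multiplicity `q` is excluded by `#J < 3 * q`. -/
theorem exists_pair {F : ι → G} {J : Finset ι} {q : ℕ} (hq : ∀ g, mult F J g ≤ q)
    (hqJ : q < #J) (h3 : #J < 3 * q) :
    ∃ i ∈ J, ∃ j ∈ J, F i ≠ F j ∧ ∀ g, mult F (J \ {i, j}) g + 1 ≤ q := by
  obtain ⟨i, hi, hmi⟩ := exists_max_image J (fun k => mult F J (F k)) (card_pos.1 (by omega))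
  have hne : (J.filter fun k => F k ≠ F i).Nonempty := by
    rw [filter_nonempty_iff]
    by_contra! hcon
    have := hq (F i)
    rw [mult, filter_true_of_mem hcon] at this
    omega
  obtain ⟨j, hj, hmj⟩ := exists_max_image _ (fun k => mult F J (F k)) hne
  rw [mem_filter] at hj
  refine ⟨i, hi, j, hj.1, hj.2.symm, fun g => ?_⟩
  by_cases hgi : g = F i
  · subst hgi
    exact (mult_sdiff_pair_add hi (by simp)).trans (hq _)
  by_cases hgj : g = F j
  · subst hgj
    exact (mult_sdiff_pair_add hj.1 (by simp)).trans (hq _)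
  have hle : mult F (J \ {i, j}) g ≤ mult F J g := mult_mono sdiff_subset g
  by_contra hcon
  have hg : (J.filter fun k => F k = g).Nonempty := card_pos.1 (by unfold mult at *; omega)
  obtain ⟨k, hk⟩ := hg
  rw [mem_filter] at hk
  have h1 := hmi k hk.1
  have h2 := hmj k (mem_filter.2 ⟨hk.1, by rw [hk.2]; exact hgi⟩)
  rw [hk.2] at h1 h2
  have hsum : mult F J (F i) + mult F J (F j) + mult F J g ≤ #J := by
    unfold mult
    rw [← card_union_of_disjoint, ← card_union_of_disjoint]
    · refine card_le_card ?_
      simp [union_subset_iff]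
    · rw [disjoint_union_left]
      constructor
      · exact disjoint_filter.2 fun x _ h h' => hgi (h'.symm.trans h)
      · exact disjoint_filter.2 fun x _ h h' => hgj (h'.symm.trans h)
    · exact disjoint_filter.2 fun x _ h h' => hj.2 (h'.symm.trans h)
  omega

theorem card_subsetSums_split [Finite G] {F : ι → G} {J : Finset ι} (hz : ZeroSumFree F J)
    {i j : ι} (hi : i ∈ J) (hj : j ∈ J) (hne : F i ≠ F j) :
    #(J \ {i, j}) + 2 = #J ∧ #(subsetSums F (J \ {i, j})) + 3 ≤ #(subsetSums F J) := by
  have hij : i ≠ j := fun h => hne (by rw [h])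
  have hsub : ({i, j} : Finset ι) ⊆ J := by
    intro k hk
    simp only [mem_insert, mem_singleton] at hk
    rcases hk with rfl | rfl <;> assumption
  have hu : (J \ {i, j}) ∪ {i, j} = J := sdiff_union_of_subset hsub
  have h1 := card_subsetSums_union (F := F) (J := J \ {i, j}) (K := {i, j}) sdiff_disjoint
    (by rwa [hu])
  have h2 := card_subsetSums_pair hne (hz.mono hsub)
  rw [hu] at h1
  have h3 := card_sdiff_add_card_eq_card hsub
  rw [card_pair hij] at h3
  exact ⟨h3, by omega⟩

/-- When no value is too frequent, `p` disjoint pairs of terms with distinct values can be split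
off, and each of them contributes one more subset sum than two equal terms would. -/
theorem card_subsetSums_of_mult [Finite G] {F : ι → G} (p : ℕ) : ∀ J : Finset ι,
    ZeroSumFree F J → 2 * p ≤ #J → (∀ g, mult F J g + p ≤ #J) →
    #J + p + 1 ≤ #(subsetSums F J) := by
  induction p with
  | zero => intro J hz _ _; exact card_le_card_subsetSums J hz
  | succ p ih =>
    intro J hz hp hm
    obtain ⟨i, hi, j, hj, hne, hq⟩ := exists_pair (F := F) (J := J) (q := #J - (p + 1))
      (fun g => by have := hm g; omega) (by omega) (by omega)
    obtain ⟨hc, hs⟩ := card_subsetSums_split hz hi hj hne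
    have := ih (J \ {i, j}) (hz.mono sdiff_subset) (by omega) (fun g => by have := hq g; omega)
    omega

theorem nsmul_mem_subsetSums {F : ι → G} {A : Finset ι} {g : G} (hA : ∀ i ∈ A, F i = g) {k : ℕ}
    (hk : k ≤ #A) : k • g ∈ subsetSums F A := by
  obtain ⟨S, hS, hc⟩ := exists_subset_card_eq hk
  refine mem_subsetSums.2 ⟨S, hS, ?_⟩
  rw [sum_congr rfl fun i hi => hA i (hS hi), sum_const, hc]

/-- In a zero-sum free family, the negative of a nonempty subset sum is not a sum of a disjoint
subset. -/
theorem ZeroSumFree.neg_notMem {F : ι → G} {J A B : Finset ι} (hz : ZeroSumFree F J)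
    (hA : A ⊆ J) (hB : B ⊆ J) (hd : Disjoint A B) (hne : B.Nonempty)
    (h : -∑ i ∈ B, F i ∈ subsetSums F A) : False := by
  obtain ⟨S, hS, hsum⟩ := mem_subsetSums.1 h
  have := hz (S ∪ B) (union_subset (hS.trans hA) hB)
    (by rw [sum_union (hd.mono_left hS), hsum, neg_add_cancel])
  exact hne.ne_empty (union_eq_empty.1 this).2

end General

/-! ### Long zero-sum free families in cyclic groups -/

section Cyclic

variable {ι : Type*} [DecidableEq ι]

theorem triple_zmod_five : ∀ a b c : ZMod 5, a ≠ 0 → b ≠ 0 → c ≠ 0 → a + b ≠ 0 → a + c ≠ 0 →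
    b + c ≠ 0 → a = b ∨ a = c ∨ b = c := by decide

theorem triple_zmod_eight : ∀ a b c : ZMod 8, a ≠ b → a ≠ c → b ≠ c → a ≠ 0 → b ≠ 0 → c ≠ 0 →
    a + b ≠ 0 → a + c ≠ 0 → b + c ≠ 0 → a + b + c ≠ 0 →
    6 ≤ #({0, a, b, c, a + b, a + c, b + c, a + b + c} : Finset (ZMod 8)) := by decide +kernel

theorem pair_zmod_four : ∀ a b : ZMod 4, a ≠ 0 → b ≠ 0 → a + b ≠ 0 →
    (a = 1 ∨ a = 3) ∨ (b = 1 ∨ b = 3) := by decide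

theorem ne_of_mult_le_one {G : Type*} [AddCommGroup G] [DecidableEq G] {F : ι → G} {J : Finset ι}
    (h : ∀ g, mult F J g ≤ 1) {i j : ι} (hi : i ∈ J) (hj : j ∈ J) (hij : i ≠ j) : F i ≠ F j := by
  intro he
  exact hij (card_le_one.1 (h (F i)) i (by simp [hi]) j (by simp [hj, he]))

theorem ZeroSumFree.pair_ne {G : Type*} [AddCommGroup G] {F : ι → G} {J : Finset ι}
    (h : ZeroSumFree F J) {i j : ι} (hi : i ∈ J) (hj : j ∈ J) (hij : i ≠ j) :
    F i + F j ≠ 0 := fun h0 => by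
  have := h {i, j} (insert_subset hi (singleton_subset_iff.2 hj)) (by rwa [sum_pair hij])
  simp at this

/-- A zero-sum free family of length `n - δ` has a value of multiplicity at least `n - 2δ + 1`
(Bovey, Erdős and Niven). The counting bound `card_subsetSums_of_mult` handles `n ≥ 3δ`; the other
admissible pairs are `n ≤ 2δ` (where multiplicity one suffices), `(5, 2)` and `(8, 3)`. -/
theorem exists_large_mult {n δ : ℕ} [NeZero n] (hδ1 : 1 ≤ δ) (hδ2 : 4 * (δ - 1) ≤ n)
    {F : ι → ZMod n} {J : Finset ι} (hz : ZeroSumFree F J) (hJ : #J + δ = n) :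
    ∃ g, n + 1 ≤ mult F J g + 2 * δ := by
  by_contra! hcon
  have hle : #(subsetSums F J) ≤ n := by
    simpa [ZMod.card] using card_le_univ (subsetSums F J)
  by_cases hn : 3 * δ ≤ n
  · have := card_subsetSums_of_mult δ J hz (by omega) (fun g => by have := hcon g; omega)
    omega
  · have hδ3 : δ ≤ 3 := by omega
    by_cases hsmall : n + 1 ≤ 2 * δ + 1
    · rcases J.eq_empty_or_nonempty with rfl | ⟨i, hi⟩
      · have := hcon 0
        simp at hJ
        omega
      · have h1 := hcon (F i)
        have : 0 < mult F J (F i) := card_pos.2 ⟨i, by simp [hi]⟩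
        omega
    have hcases : (n = 5 ∧ δ = 2) ∨ (n = 8 ∧ δ = 3) := by omega
    rcases hcases with ⟨rfl, rfl⟩ | ⟨rfl, rfl⟩
    · have h1 : ∀ g, mult F J g ≤ 1 := fun g => by have := hcon g; omega
      obtain ⟨i, j, k, hij, hik, hjk, rfl⟩ := card_eq_three.1 (show #J = 3 by omega)
      have hi : i ∈ ({i, j, k} : Finset ι) := by simp
      have hj : j ∈ ({i, j, k} : Finset ι) := by simp
      have hk : k ∈ ({i, j, k} : Finset ι) := by simp
      rcases triple_zmod_five (F i) (F j) (F k) (hz.ne_zero hi) (hz.ne_zero hj) (hz.ne_zero hk)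
        (hz.pair_ne hi hj hij) (hz.pair_ne hi hk hik) (hz.pair_ne hj hk hjk) with h | h | h
      · exact ne_of_mult_le_one h1 hi hj hij h
      · exact ne_of_mult_le_one h1 hi hk hik h
      · exact ne_of_mult_le_one h1 hj hk hjk h
    -- For `n = 8`: a pair of distinct values (3 sums) and a triple of distinct values (6 sums,
    -- counting `0`) yield at least nine elements of `ZMod 8`.
    · obtain ⟨i', hi', j', hj', hne, hq⟩ := exists_pair (F := F) (J := J) (q := 2)
        (fun g => by have := hcon g; omega) (by omega) (by omega)
      obtain ⟨hc, hs⟩ := card_subsetSums_split hz hi' hj' hne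
      have hz' := hz.mono (sdiff_subset : J \ {i', j'} ⊆ J)
      have h1 : ∀ g, mult F (J \ {i', j'}) g ≤ 1 := fun g => by have := hq g; omega
      generalize J \ {i', j'} = K at *
      obtain ⟨i, j, k, hij, hik, hjk, rfl⟩ := card_eq_three.1 (show #K = 3 by omega)
      have hi : i ∈ ({i, j, k} : Finset ι) := by simp
      have hj : j ∈ ({i, j, k} : Finset ι) := by simp
      have hk : k ∈ ({i, j, k} : Finset ι) := by simp
      have hijk : ∑ x ∈ {i, j, k}, F x = F i + F j + F k := by
        rw [sum_insert (by simp [hij, hik]), sum_pair hjk, add_assoc]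
      have h6 := triple_zmod_eight (F i) (F j) (F k) (ne_of_mult_le_one h1 hi hj hij)
        (ne_of_mult_le_one h1 hi hk hik) (ne_of_mult_le_one h1 hj hk hjk)
        (hz'.ne_zero hi) (hz'.ne_zero hj) (hz'.ne_zero hk)
        (hz'.pair_ne hi hj hij) (hz'.pair_ne hi hk hik) (hz'.pair_ne hj hk hjk)
        (fun h0 => by
          have := hz' {i, j, k} Subset.rfl (by rw [hijk, h0])
          simp at this)
      have hsub : ({0, F i, F j, F k, F i + F j, F i + F k, F j + F k, F i + F j + F k} :
          Finset (ZMod 8)) ⊆ subsetSums F {i, j, k} := by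
        intro z hz''
        simp only [mem_insert, mem_singleton] at hz''
        rw [mem_subsetSums]
        rcases hz'' with rfl | rfl | rfl | rfl | rfl | rfl | rfl | rfl
        · exact ⟨∅, by simp, by simp⟩
        · exact ⟨{i}, by simp, by simp⟩
        · exact ⟨{j}, by simp, by simp⟩
        · exact ⟨{k}, by simp, by simp⟩
        · exact ⟨{i, j}, by simp [insert_subset_iff], sum_pair hij⟩
        · exact ⟨{i, k}, by simp [insert_subset_iff], sum_pair hik⟩
        · exact ⟨{j, k}, by simp, sum_pair hjk⟩
        · exact ⟨{i, j, k}, Subset.rfl, hijk⟩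
      have := card_le_card hsub
      omega

/-- The frequent value can be taken of order `n`. A frequent value of smaller order must have order
`n / 2`, and its multiples fill the index-two subgroup `H` it generates; then at most one further
term is possible, which leaves only `n = 4`, `δ = 2`. -/
theorem exists_large_mult_generator {n δ : ℕ} [NeZero n] (hδ1 : 1 ≤ δ) (hδ2 : 4 * (δ - 1) ≤ n)
    {F : ι → ZMod n} {J : Finset ι} (hz : ZeroSumFree F J) (hJ : #J + δ = n) :
    ∃ g, addOrderOf g = n ∧ n + 1 ≤ mult F J g + 2 * δ := by
  -- For `n = 4`, `δ = 2` the family may be `2, ±1`, and the term of order four has to be chosen.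
  by_cases h4 : n = 4 ∧ δ = 2
  · obtain ⟨rfl, rfl⟩ := h4
    obtain ⟨i, j, hij, rfl⟩ := card_eq_two.1 (show #J = 2 by omega)
    have ho : ∀ a : ZMod 4, a = 1 ∨ a = 3 → addOrderOf a = 4 := by
      rintro a (rfl | rfl)
      · exact ZMod.addOrderOf_one 4
      · simpa using ZMod.addOrderOf_coe 3 (n := 4) (by norm_num)
    have hi : i ∈ ({i, j} : Finset ι) := by simp
    have hj : j ∈ ({i, j} : Finset ι) := by simp
    have hm : ∀ k ∈ ({i, j} : Finset ι), 4 + 1 ≤ mult F {i, j} (F k) + 2 * 2 := by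
      intro k hk
      have : 0 < mult F {i, j} (F k) := card_pos.2 ⟨k, mem_filter.2 ⟨hk, rfl⟩⟩
      omega
    rcases pair_zmod_four (F i) (F j) (hz.ne_zero hi) (hz.ne_zero hj) (hz.pair_ne hi hj hij)
      with h | h
    · exact ⟨F i, ho _ h, hm i hi⟩
    · exact ⟨F j, ho _ h, hm j hj⟩
  obtain ⟨g, hg⟩ := exists_large_mult hδ1 hδ2 hz hJ
  refine ⟨g, ?_, hg⟩
  by_contra hd
  have hn0 : 0 < n := NeZero.pos n
  set A := J.filter fun i => F i = g with hA
  have hAm : #A = mult F J g := rfl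
  have hAg : ∀ i ∈ A, F i = g := fun i hi => (mem_filter.1 hi).2
  have hAJ : A ⊆ J := filter_subset _ _
  have hcardH : Nat.card (AddSubgroup.zmultiples g) * (AddSubgroup.zmultiples g).index = n := by
    rw [AddSubgroup.card_mul_index, Nat.card_zmod]
  rw [Nat.card_zmultiples] at hcardH
  set d := addOrderOf g with hdd
  set H := AddSubgroup.zmultiples g with hH
  have hdpos : 0 < d := addOrderOf_pos g
  have hind : 2 ≤ H.index := by
    by_contra hlt
    have : H.index = 0 ∨ H.index = 1 := by omega
    rcases this with h | h <;> rw [h] at hcardH <;> omega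
  have h2d : 2 * d ≤ n := by
    calc 2 * d = d * 2 := mul_comm _ _
      _ ≤ d * H.index := Nat.mul_le_mul_left _ hind
      _ = n := hcardH
  have hmd : #A < d := by
    by_contra! hle
    obtain ⟨S, hS, hc⟩ := exists_subset_card_eq hle
    have := hz S (hS.trans hAJ) (by
      rw [sum_congr rfl fun i hi => hAg i (hS hi), sum_const, hc, addOrderOf_nsmul_eq_zero])
    rw [this] at hc
    simp at hc
    omega
  have hn4 : n = 4 * (δ - 1) := by omega
  have hindex : H.index = 2 := by
    have : d * H.index = d * 2 := by omega
    exact Nat.eq_of_mul_eq_mul_left hdpos this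
  have hmem : ∀ z ∈ H, z ∈ subsetSums F A := by
    intro z hz'
    rw [hH, mem_zmultiples_iff_mem_range_addOrderOf, mem_image] at hz'
    obtain ⟨k, hk, rfl⟩ := hz'
    rw [mem_range] at hk
    exact nsmul_mem_subsetSums hAg (by omega)
  have hout : ∀ i ∈ J \ A, F i ∉ H := by
    intro i hi hiH
    refine hz.neg_notMem hAJ (singleton_subset_iff.2 (mem_sdiff.1 hi).1)
      (disjoint_singleton_right.2 (mem_sdiff.1 hi).2) (singleton_nonempty i) (hmem _ ?_)
    rw [sum_singleton]
    exact H.neg_mem hiH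
  have hcard2 : 1 < #(J \ A) := by
    rw [card_sdiff_of_subset hAJ]
    omega
  obtain ⟨i, hi, j, hj, hij⟩ := one_lt_card.1 hcard2
  have hsum : F i + F j ∈ H := by
    rw [AddSubgroup.add_mem_iff_of_index_two hindex]
    exact iff_of_false (hout i hi) (hout j hj)
  rw [mem_sdiff] at hi hj
  refine hz.neg_notMem hAJ (B := {i, j}) (insert_subset hi.1 (singleton_subset_iff.2 hj.1))
    ?_ (by simp) (hmem _ ?_)
  · rw [disjoint_insert_right, disjoint_singleton_right]
    exact ⟨hi.2, hj.2⟩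
  · rw [sum_pair hij]
    exact H.neg_mem hsum

/-- Given about `n / 2` copies of a generator `g`, the subset sums of `A ∪ B` fill an interval
`0, g, 2g, …` of length the sum of all coefficients, so this sum cannot reach `n`. -/
theorem sum_coeff_lt {n : ℕ} {F : ι → ZMod n} {J A : Finset ι} {g : ZMod n}
    (hg : addOrderOf g = n) (hz : ZeroSumFree F J) (hAJ : A ⊆ J) (hA : ∀ i ∈ A, F i = g)
    (hAn : #A < n) (hAn2 : n ≤ 2 * #A + 2) (c : ι → ℕ) (hc : ∀ i, F i = c i • g)
    (hcn : ∀ i, c i < n) (B : Finset ι) : B ⊆ J → Disjoint A B →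
    #A + ∑ i ∈ B, c i < n ∧ ∀ k ≤ #A + ∑ i ∈ B, c i, k • g ∈ subsetSums F (A ∪ B) := by
  have hng : n • g = 0 := addOrderOf_dvd_iff_nsmul_eq_zero.1 hg.dvd
  have hneg : ∀ i, -F i = (n - c i) • g := by
    intro i
    rw [hc i, neg_eq_iff_add_eq_zero, ← add_nsmul, Nat.add_sub_cancel' (hcn i).le, hng]
  induction B using Finset.induction_on with
  | empty =>
    intro _ _
    simp only [sum_empty, add_zero, union_empty]
    exact ⟨hAn, fun k hk => nsmul_mem_subsetSums hA hk⟩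
  | insert i B hi ih =>
    intro hBJ hd
    rw [disjoint_insert_right] at hd
    have hBJ' := (subset_insert i B).trans hBJ
    have hiJ := hBJ (mem_insert_self i B)
    obtain ⟨h1, h2⟩ := ih hBJ' hd.2
    rw [sum_insert hi]
    have hdis : Disjoint (A ∪ B) {i} := by
      rw [disjoint_singleton_right, mem_union]; tauto
    -- Otherwise `-F i = (n - c i) • g` is a subset sum of `A ∪ B`.
    have hbig : #A + ∑ i ∈ B, c i < n - c i := by
      by_contra! hle
      refine hz.neg_notMem (A := A ∪ B) (B := {i}) (union_subset hAJ hBJ')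
        (singleton_subset_iff.2 hiJ) hdis (singleton_nonempty i) ?_
      rw [sum_singleton, hneg]
      exact h2 _ hle
    refine ⟨by omega, fun k hk => ?_⟩
    have hu : A ∪ insert i B = (A ∪ B) ∪ {i} := by
      ext x; simp only [mem_union, mem_insert, mem_singleton]; tauto
    rw [hu, subsetSums_union hdis]
    -- Since `c i ≤ n - 1 - #A ≤ #A + 1`, the interval and its translate by `c i` leave no gap.
    by_cases hks : k ≤ #A + ∑ i ∈ B, c i
    · rw [← add_zero (k • g)]
      exact add_mem_add (h2 k hks) (zero_mem_subsetSums _ _)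
    · have : k • g = (k - c i) • g + F i := by
        rw [hc i, ← add_nsmul, Nat.sub_add_cancel (by omega)]
      rw [this]
      exact add_mem_add (h2 _ (by omega)) (mem_subsetSums.2 ⟨{i}, Subset.rfl, sum_singleton _ _⟩)

theorem exists_nsmul_eq {n : ℕ} [NeZero n] {g : ZMod n} (hg : addOrderOf g = n) (z : ZMod n) :
    ∃ c < n, z = c • g := by
  have htop : AddSubgroup.zmultiples g = ⊤ := by
    apply AddSubgroup.eq_top_of_card_eq
    rw [Nat.card_zmultiples, hg, Nat.card_zmod]
  have : z ∈ AddSubgroup.zmultiples g := htop ▸ AddSubgroup.mem_top z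
  rw [mem_zmultiples_iff_mem_range_addOrderOf, mem_image] at this
  obtain ⟨c, hc, rfl⟩ := this
  rw [mem_range, hg] at hc
  exact ⟨c, hc, rfl⟩

/-- Structure of zero-sum free families of length `n - δ`: up to a generator `g`, all but `δ - 1`
terms equal `g`, and the others are multiples of `g` whose coefficients have sum at most `2δ - 2`. -/
theorem inverse_zeroSumFree {n δ : ℕ} [NeZero n] (hδ1 : 1 ≤ δ) (hδ2 : 4 * (δ - 1) ≤ n)
    {F : ι → ZMod n} {J : Finset ι} (hz : ZeroSumFree F J) (hJ : #J + δ = n) :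
    ∃ g, addOrderOf g = n ∧ ∃ A ⊆ J, ∃ B ⊆ J, Disjoint A B ∧ #A + 2 * δ = n + 1 ∧ #B = δ - 1 ∧
      (∀ i ∈ A, F i = g) ∧ ∃ c : ι → ℕ, (∀ i ∈ B, F i = c i • g) ∧ ∑ i ∈ B, c i ≤ 2 * (δ - 1) := by
  obtain ⟨g, hg, hm⟩ := exists_large_mult_generator hδ1 hδ2 hz hJ
  have hn : 0 < n := NeZero.pos n
  obtain ⟨A, hA, hAc⟩ := exists_subset_card_eq (s := {i ∈ J | F i = g}) (n := n + 1 - 2 * δ)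
    (by unfold mult at hm; omega)
  have hAJ : A ⊆ J := hA.trans (filter_subset _ _)
  have hAg : ∀ i ∈ A, F i = g := fun i hi => (mem_filter.1 (hA hi)).2
  choose c hcn hc using fun i => exists_nsmul_eq hg (F i)
  obtain ⟨hs, -⟩ := sum_coeff_lt hg hz hAJ hAg (by omega) (by omega) c hc hcn (J \ A) sdiff_subset
    disjoint_sdiff
  refine ⟨g, hg, A, hAJ, J \ A, sdiff_subset, disjoint_sdiff, by omega, ?_, hAg, c,
    fun i _ => hc i, by omega⟩
  rw [card_sdiff_of_subset hAJ]
  omega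

theorem exists_centered {n : ℕ} [NeZero n] (g : ZMod n) (z : ℤ) : ∃ x : ℤ,
    -(n : ℤ) < 2 * x ∧ 2 * x ≤ n ∧ |x| ≤ |z| ∧ x • g = z • g := by
  have h := ZMod.valMinAbs_mem_Ioc (z : ZMod n)
  rw [Set.mem_Ioc] at h
  refine ⟨(z : ZMod n).valMinAbs, by omega, by omega, ?_, ?_⟩
  · have := ZMod.natAbs_min_of_le_div_two n (z : ZMod n).valMinAbs z (ZMod.coe_valMinAbs _)
      (ZMod.natAbs_valMinAbs_le _)
    rw [Int.abs_eq_natAbs, Int.abs_eq_natAbs]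
    exact_mod_cast this
  · rw [zsmul_eq_mul, zsmul_eq_mul, ZMod.coe_valMinAbs]

theorem map_val_eq_map_univ {α : Type*} (B : Finset ι) {k : ℕ} (hk : #B = k) (f : ι → α) :
    B.val.map f =
      (univ : Finset (Fin k)).val.map fun i => f ((B.equivFinOfCardEq hk).symm i : ι) := by
  set e := (B.equivFinOfCardEq hk).symm
  have h1 : B.val.map f = (univ : Finset B).val.map fun i : B => f i.1 := by
    rw [univ_eq_attach]
    exact (Multiset.attach_map_val' B.val f).symm
  rw [h1, ← map_univ_equiv e, map_val, Multiset.map_map]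
  rfl

/-- The multiset form of the conclusion, once the terms `±g` (indexed by `A`) and the terms `± c i • g`
(indexed by `B`) have been located, with `g` at least as frequent as the other value on `A`. -/
theorem representation {n δ ℓ : ℕ} [NeZero n] (hδ1 : 1 ≤ δ) (T : Fin ℓ → ZMod n) {g : ZMod n}
    (hg : addOrderOf g = n) {A B : Finset (Fin ℓ)} (hd : Disjoint A B)
    (hAc : #A + 2 * δ = n + 1) (hBc : #B = δ - 1) (hA : ∀ i ∈ A, T i = g ∨ T i = -g)
    (huv : #{i ∈ A | ¬ T i = g} ≤ #{i ∈ A | T i = g})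
    (c : Fin ℓ → ℕ) (hB : ∀ i ∈ B, T i = c i • g ∨ T i = -(c i • g)) (hB0 : ∀ i ∈ B, T i ≠ 0)
    (hc : ∑ i ∈ B, c i ≤ 2 * (δ - 1)) :
    ∃ u v w : ℕ, v ≤ u ∧ u + v + 2 * δ = n + 1 ∧ w + n = ℓ + δ ∧
    ∃ x : Fin (δ - 1) → ℤ, ∃ y : Fin w → ℤ,
      (∀ i, -(n : ℤ) < 2 * x i ∧ 2 * x i ≤ (n : ℤ) ∧ x i ≠ 0) ∧
      (∀ j, -(n : ℤ) < 2 * y j ∧ 2 * y j ≤ (n : ℤ)) ∧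
      (∑ i, |x i|) ≤ 2 * (δ : ℤ) - 2 ∧
      Finset.univ.val.map T =
        Multiset.replicate u g + Multiset.replicate v (-g) +
          Multiset.map (fun i => x i • g) Finset.univ.val +
          Multiset.map (fun j => y j • g) Finset.univ.val := by
  have hX : ∀ i, ∃ x : ℤ, i ∈ B →
      -(n : ℤ) < 2 * x ∧ 2 * x ≤ n ∧ |x| ≤ c i ∧ x • g = T i := by
    intro i
    by_cases hi : i ∈ B
    · rcases hB i hi with h | h
      · obtain ⟨x, h1, h2, h3, h4⟩ := exists_centered g (c i : ℤ)
        exact ⟨x, fun _ => ⟨h1, h2, by simpa using h3, by rw [h4, h, natCast_zsmul]⟩⟩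
      · obtain ⟨x, h1, h2, h3, h4⟩ := exists_centered g (-(c i : ℤ))
        exact ⟨x, fun _ => ⟨h1, h2, by simpa using h3, by rw [h4, h, neg_zsmul, natCast_zsmul]⟩⟩
    · exact ⟨0, fun h => absurd h hi⟩
  have hY : ∀ i, ∃ y : ℤ, -(n : ℤ) < 2 * y ∧ 2 * y ≤ n ∧ y • g = T i := by
    intro i
    obtain ⟨k, -, hk⟩ := exists_nsmul_eq hg (T i)
    obtain ⟨x, h1, h2, -, h4⟩ := exists_centered g (k : ℤ)
    exact ⟨x, h1, h2, by rw [h4, hk, natCast_zsmul]⟩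
  choose x hx using hX
  choose y hy using hY
  set C := (A ∪ B)ᶜ with hC
  have hCc : #A + #B + #C = ℓ := by
    rw [← card_union_of_disjoint hd, card_add_card_compl, Fintype.card_fin]
  have hsplit := card_filter_add_card_filter_not (s := A) (fun i => T i = g)
  refine ⟨#{i ∈ A | T i = g}, #{i ∈ A | ¬ T i = g}, #C, huv, by omega, by omega,
    fun i => x ((B.equivFinOfCardEq hBc).symm i), fun j => y ((C.equivFinOfCardEq rfl).symm j),
    ?_, ?_, ?_, ?_⟩
  · intro i
    have hm := ((B.equivFinOfCardEq hBc).symm i).2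
    obtain ⟨h1, h2, -, h4⟩ := hx _ hm
    refine ⟨h1, h2, fun h0 => hB0 _ hm ?_⟩
    rw [← h4, show x _ = 0 from h0, zero_zsmul]
  · intro j
    exact ⟨(hy _).1, (hy _).2.1⟩
  · have h1 : ∑ i, |x ((B.equivFinOfCardEq hBc).symm i)| = ∑ i ∈ B, |x i| :=
      congrArg Multiset.sum (map_val_eq_map_univ B hBc fun i => |x i|).symm
    rw [h1]
    calc ∑ i ∈ B, |x i| ≤ ∑ i ∈ B, (c i : ℤ) := sum_le_sum fun i hi => (hx i hi).2.2.1
      _ = ((∑ i ∈ B, c i : ℕ) : ℤ) := by push_cast; rfl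
      _ ≤ 2 * (δ : ℤ) - 2 := by omega
  · rw [← map_val_eq_map_univ B hBc fun i => x i • g, ← map_val_eq_map_univ C rfl fun j => y j • g]
    have hu : (univ : Finset (Fin ℓ)).val =
        ({i ∈ A | T i = g} : Finset _).val + ({i ∈ A | ¬ T i = g} : Finset _).val + B.val
          + C.val := by
      have e1 : ({i ∈ A | T i = g} : Finset _).val + ({i ∈ A | ¬ T i = g} : Finset _).val
          = A.val := by
        rw [filter_val, filter_val, Multiset.filter_add_not]
      have e2 : A.val + B.val = (A ∪ B).val := by
        rw [← disjUnion_eq_union _ _ hd, disjUnion_val]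
      have e3 : (A ∪ B).val + C.val = univ.val := by
        rw [hC, ← union_compl (A ∪ B),
          ← disjUnion_eq_union (A ∪ B) (A ∪ B)ᶜ disjoint_compl_right, disjUnion_val]
      rw [e1, e2, e3]
    rw [hu, Multiset.map_add, Multiset.map_add, Multiset.map_add]
    congr 1
    · congr 1
      · congr 1
        · rw [Multiset.map_congr rfl (g := fun _ => g) fun i hi => (mem_filter.1 hi).2,
            Multiset.map_const', card_val]
        · rw [Multiset.map_congr rfl (g := fun _ => -g) fun i hi => ?_, Multiset.map_const',
            card_val]
          obtain ⟨hi1, hi2⟩ := mem_filter.1 hi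
          exact (hA i hi1).resolve_left hi2
      · exact Multiset.map_congr rfl fun i hi => (hx i hi).2.2.2.symm
    · exact Multiset.map_congr rfl fun i _ => (hy i).2.2.symm

end Cyclic

end ZeroSumInverse

open ZeroSumInverse

theorem stmt19 (n : ℕ) (hn : 1 ≤ n) (δ : ℕ) (hδ1 : 1 ≤ δ) (hδ2 : 4 * (δ - 1) ≤ n)
    (ℓ : ℕ) (T : Fin ℓ → ZMod n)
    (hN : Nat.card {S : Finset (Fin ℓ) // ∑ i ∈ S, T i = 0} < 2 ^ (ℓ + 1 + δ - n)) :
    ∃ g : ZMod n, addOrderOf g = n ∧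
    ∃ u v w : ℕ, v ≤ u ∧ u + v + 2 * δ = n + 1 ∧ w + n = ℓ + δ ∧
    ∃ x : Fin (δ - 1) → ℤ, ∃ y : Fin w → ℤ,
      (∀ i, -(n : ℤ) < 2 * x i ∧ 2 * x i ≤ (n : ℤ) ∧ x i ≠ 0) ∧
      (∀ j, -(n : ℤ) < 2 * y j ∧ 2 * y j ≤ (n : ℤ)) ∧
      (∑ i, |x i|) ≤ 2 * (δ : ℤ) - 2 ∧
      Finset.univ.val.map T =
        Multiset.replicate u g + Multiset.replicate v (-g) +
          Multiset.map (fun i => x i • g) Finset.univ.val +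
          Multiset.map (fun j => y j • g) Finset.univ.val := by
  have : NeZero n := ⟨by omega⟩
  obtain ⟨F, hF, K, -, hz, hb⟩ := exists_signed_zeroSumFree univ T
  have hcount : Nat.card {S : Finset (Fin ℓ) // ∑ i ∈ S, T i = 0} = sumCount T univ 0 := by
    rw [Nat.card_eq_fintype_card, Fintype.card_subtype, sumCount, powerset_univ]
  rw [hcount] at hN
  rw [card_univ, Fintype.card_fin] at hb
  have hKn : n ≤ #K + δ := by
    have h1 : 2 ^ ℓ < 2 ^ (#K + (ℓ + 1 + δ - n)) := by
      rw [pow_add]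
      exact hb.trans_lt (Nat.mul_lt_mul_of_pos_left hN (by positivity))
    have := (Nat.pow_lt_pow_iff_right one_lt_two).1 h1
    have hKl : #K ≤ ℓ := by simpa using card_le_univ K
    omega
  have hδn : δ ≤ n := by omega
  obtain ⟨J, hJK, hJ⟩ := exists_subset_card_eq (show n - δ ≤ #K by omega)
  have hzJ := hz.mono hJK
  obtain ⟨g, hg, A, hAJ, B, hBJ, hd, hAc, hBc, hA, c, hB, hc⟩ :=
    inverse_zeroSumFree hδ1 hδ2 hzJ (by omega)
  have hA' : ∀ i ∈ A, T i = g ∨ T i = -g := by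
    intro i hi
    rcases hF i with h | h
    · left; rw [← h, hA i hi]
    · right; rw [← hA i hi, h, neg_neg]
  have hB' : ∀ i ∈ B, T i = c i • g ∨ T i = -(c i • g) := by
    intro i hi
    rcases hF i with h | h
    · left; rw [← h, hB i hi]
    · right; rw [← hB i hi, h, neg_neg]
  have hB0 : ∀ i ∈ B, T i ≠ 0 := by
    intro i hi h0
    refine hzJ.ne_zero (hBJ hi) ?_
    rcases hF i with h | h <;> simp [h, h0]
  by_cases huv : #{i ∈ A | ¬ T i = g} ≤ #{i ∈ A | T i = g}
  · exact ⟨g, hg, representation hδ1 T hg hd hAc hBc hA' huv c hB' hB0 hc⟩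
  -- If `-g` is the more frequent value, it takes the role of the generator.
  · have hg' : addOrderOf (-g) = n := by rw [addOrderOf_neg, hg]
    refine ⟨-g, hg', representation hδ1 T hg' hd hAc hBc ?_ ?_ c ?_ hB0 hc⟩
    · intro i hi
      rw [neg_neg]; exact (hA' i hi).symm
    · have h1 : #{i ∈ A | ¬ T i = g} ≤ #{i ∈ A | T i = -g} :=
        card_le_card fun i hi => by
          rw [mem_filter] at hi ⊢
          exact ⟨hi.1, (hA' i hi.1).resolve_left hi.2⟩
      have h2 := card_filter_add_card_filter_not (s := A) (fun i => T i = g)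
      have h3 := card_filter_add_card_filter_not (s := A) (fun i => T i = -g)
      omega
    · intro i hi
      rw [smul_neg, neg_neg]; exact (hB' i hi).symm
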